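/- For all integers k ≥ 1 and m ≥ 0, 2^m · det( C(2m, m−i+j) − C(2m, m−i−j) )_{1≤i,j≤k} = ∏_{j=0}^{2k} ∏_{i=1}^{m} (2i+j)/(i+j). -/

import Mathlib

open Finset

/-- The binomial coefficient `C(N, r)` for an integer `r`, with the convention
that it vanishes for `r < 0` (and, via `Nat.choose`, for `r > N`). -/
def binQ (N : ℕ) (r : ℤ) : ℚ :=
  if 0 ≤ r then (N.choose r.toNat : ℚ) else 0

/-- Central binomial kernel, by recursion. -/
def GG : ℕ → ℤ → ℚ
  | 0, r => if r = 0 then 1 else 0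
  | n + 1, r => GG n (r - 1) + 2 * GG n r + GG n (r + 1)

def FF (n : ℕ) (i : ℤ) : ℚ := GG n (i - 1) - GG n (i + 1)

lemma binQ_nat (N n : ℕ) : binQ N (n : ℤ) = (N.choose n : ℚ) := by
  simp [binQ]

lemma binQ_succ (N : ℕ) (r : ℤ) : binQ (N + 1) r = binQ N r + binQ N (r - 1) := by
  rcases lt_trichotomy r 0 with h | h | h
  · rw [binQ, binQ, binQ, if_neg (by omega), if_neg (by omega), if_neg (by omega)]; simp
  · subst h; simp [binQ]
  · obtain ⟨n, rfl⟩ : ∃ n : ℕ, r = n + 1 := ⟨(r - 1).toNat, by omega⟩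
    have e : ((n : ℤ) + 1) = ((n + 1 : ℕ) : ℤ) := by push_cast; rfl
    rw [add_sub_cancel_right, e, binQ_nat, binQ_nat, binQ_nat, Nat.choose_succ_succ]
    push_cast; ring

lemma GG_eq (m : ℕ) (r : ℤ) : binQ (2 * m) (m + r) = GG m r := by
  induction m generalizing r with
  | zero =>
    rcases lt_trichotomy r 0 with h | h | h
    · rw [binQ, if_neg (by simp; omega), GG, if_neg (by omega)]
    · subst h; simp [binQ, GG]
    · obtain ⟨n, rfl⟩ : ∃ n : ℕ, r = n + 1 := ⟨(r - 1).toNat, by omega⟩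
      have e : (((0 : ℕ) : ℤ) + ((n : ℤ) + 1)) = ((n + 1 : ℕ) : ℤ) := by push_cast; ring
      rw [e, binQ_nat, GG, if_neg (by omega)]; simp
  | succ n ih =>
    rw [GG, ← ih, ← ih, ← ih, show 2 * (n + 1) = 2 * n + 1 + 1 by ring, binQ_succ, binQ_succ,
      binQ_succ]
    have e1 : ((n + 1 : ℕ) : ℤ) + r = n + (r + 1) := by push_cast; ring
    have e2 : (n : ℤ) + (r + 1) - 1 = n + r := by ring
    have e3 : (n : ℤ) + r - 1 = n + (r - 1) := by ring
    rw [e1, e2, e3]; ring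

lemma GG_neg (m : ℕ) (r : ℤ) : GG m (-r) = GG m r := by
  induction m generalizing r with
  | zero => simp [GG]
  | succ n ih =>
    rw [GG, GG, show -r - 1 = -(r + 1) by ring, show -r + 1 = -(r - 1) by ring, ih, ih, ih]; ring

lemma GG_zero_of (m : ℕ) (r : ℤ) (h : (m : ℤ) < r) : GG m r = 0 := by
  induction m generalizing r with
  | zero => rw [GG, if_neg (by omega)]
  | succ n ih =>
    push_cast at h
    rw [GG, ih _ (by omega), ih _ (by omega), ih _ (by omega)]; ring

lemma GG_self (m : ℕ) : GG m m = 1 := by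
  rw [← GG_eq, show (m : ℤ) + m = ((2 * m : ℕ) : ℤ) by push_cast; ring, binQ_nat]; simp

lemma FF_neg (m : ℕ) (r : ℤ) : FF m (-r) = - FF m r := by
  rw [FF, FF, show -r - 1 = -(r + 1) by ring, show -r + 1 = -(r - 1) by ring, GG_neg, GG_neg]; ring

lemma FF_succ (n : ℕ) (r : ℤ) : FF (n + 1) r = FF n (r - 1) + 2 * FF n r + FF n (r + 1) := by
  simp only [FF, GG]; ring_nf

lemma FF_zero_of (m : ℕ) (r : ℤ) (h : (m : ℤ) + 1 < r) : FF m r = 0 := by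
  rw [FF, GG_zero_of _ _ (by omega), GG_zero_of _ _ (by omega)]; ring

lemma conv (k m j : ℕ) (hj : j < k) (i : ℤ) :
    ∑ l ∈ range k, (GG m ((l + 1 : ℤ) - i) - GG m (-i - (l + 1 : ℤ))) * FF j (l + 1)
      = FF (m + j) i := by
  induction m generalizing i with
  | zero =>
    rw [zero_add]
    simp only [GG]
    have key : ∀ i : ℤ, ∑ l ∈ range k, (if (l + 1 : ℤ) - i = 0 then (1 : ℚ) else 0) * FF j (l + 1)
        = if 0 < i then FF j i else 0 := by
      intro i
      split_ifs with h
      · obtain ⟨n, rfl⟩ : ∃ n : ℕ, i = n + 1 := ⟨(i - 1).toNat, by omega⟩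
        by_cases hn : n < k
        · rw [Finset.sum_eq_single n]
          · simp
          · intro b _ hb
            rw [if_neg (by omega)]; simp
          · intro h; simp at h; omega
        · rw [FF_zero_of _ _ (by omega)]
          apply Finset.sum_eq_zero
          intro l hl
          rw [mem_range] at hl
          rw [if_neg (by omega)]; simp
      · apply Finset.sum_eq_zero
        intro l hl
        rw [if_neg (by omega)]; simp
    have e : ∀ l : ℕ, (if -i - (l + 1 : ℤ) = 0 then (1 : ℚ) else 0)
        = (if (l + 1 : ℤ) - (-i) = 0 then (1 : ℚ) else 0) := by
      intro l; congr 1; apply propext; constructor <;> intro h <;> omega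
    simp only [sub_mul, Finset.sum_sub_distrib, e]
    rw [key i, key (-i), FF_neg]
    rcases lt_trichotomy i 0 with h | h | h
    · rw [if_neg (by omega), if_pos (by omega)]; ring
    · subst h
      have := FF_neg j 0
      simp at this ⊢
      linarith
    · rw [if_pos (by omega), if_neg (by omega)]; ring
  | succ n ih =>
    rw [show n + 1 + j = n + j + 1 by ring, FF_succ, ← ih, ← ih, ← ih, Finset.mul_sum,
      ← Finset.sum_add_distrib, ← Finset.sum_add_distrib]
    apply Finset.sum_congr rfl
    intro l _
    simp only [GG]
    ring_nf

lemma GG_fact (a b : ℕ) (N : ℕ) (r : ℤ) (ha : (a : ℤ) = N + r) (hb : (b : ℤ) = N - r) :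
    GG N r * (a.factorial * b.factorial) = (2 * N).factorial := by
  rw [← GG_eq, ← ha, binQ_nat]
  have h : 2 * N = a + b := by omega
  rw [h, ← Nat.choose_mul_factorial_mul_factorial (show a ≤ a + b by omega), Nat.add_sub_cancel_left]
  push_cast; ring

lemma FF_fact (N a b : ℕ) (i : ℤ) (hi : 0 ≤ i) (ha : (a : ℤ) = N + 1 + i)
    (hb : (b : ℤ) = N + 1 - i) :
    FF N i * (a.factorial * b.factorial) = 2 * i * (2 * N + 1).factorial := by
  have f1 : (2 * N + 1).factorial = (2 * N + 1) * (2 * N).factorial := Nat.factorial_succ _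
  have haq : (a : ℚ) = N + 1 + i := by exact_mod_cast ha
  have hbq : (b : ℚ) = N + 1 - i := by exact_mod_cast hb
  have h1 : GG N (i - 1) * (a.factorial * b.factorial) = (N + i) * (N + 1 + i) * (2 * N).factorial := by
    by_cases h0 : a ≤ 1
    · have : N = 0 := by omega
      have : i = 0 := by omega
      subst_vars
      rw [GG, if_neg (by omega)]; simp
    obtain ⟨c, rfl⟩ : ∃ c, a = c + 2 := ⟨a - 2, by omega⟩
    have := GG_fact c b N (i - 1) (by push_cast at ha; omega) (by omega)
    rw [← this, Nat.factorial_succ, Nat.factorial_succ]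
    push_cast at haq ⊢
    have : (c : ℚ) = N + i - 1 := by linarith
    rw [this]; ring
  have h2 : GG N (i + 1) * (a.factorial * b.factorial) = (N - i) * (N + 1 - i) * (2 * N).factorial := by
    by_cases h0 : b ≤ 1
    · rw [GG_zero_of _ _ (by omega)]
      have : (b : ℚ) = 0 ∨ (b : ℚ) = 1 := by
        interval_cases b <;> simp
      rcases this with h | h
      · rw [← hbq, h]; ring
      · rw [show (N : ℚ) - i = 0 by linarith]; ring
    obtain ⟨c, rfl⟩ : ∃ c, b = c + 2 := ⟨b - 2, by omega⟩
    have := GG_fact a c N (i + 1) (by omega) (by push_cast at hb; omega)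
    rw [← this, Nat.factorial_succ, Nat.factorial_succ]
    push_cast at hbq ⊢
    have : (c : ℚ) = N - i - 1 := by linarith
    rw [this]; ring
  rw [FF, sub_mul, h1, h2, f1]; push_cast; ring

lemma FF_prod (N d a b : ℕ) (i : ℤ) (hi : 0 ≤ i) (ha : (a : ℤ) = N + 1 + d + i)
    (hb : (b : ℤ) = N + 1 + d - i) :
    FF N i * (a.factorial * b.factorial) = 2 * i * (2 * N + 1).factorial *
      ∏ t ∈ range d, ((N + 2 + t : ℚ) ^ 2 - i ^ 2) := by
  induction d generalizing a b with
  | zero =>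
    simp at ha hb
    simpa using FF_fact N a b i hi ha hb
  | succ d ih =>
    rw [prod_range_succ]
    have haq : (a : ℚ) = N + 1 + (d + 1) + i := by exact_mod_cast ha
    have hbq : (b : ℚ) = N + 1 + (d + 1) - i := by exact_mod_cast hb
    rcases Nat.eq_zero_or_pos b with h | h
    · have : (i : ℚ) = N + 2 + d := by rw [h] at hbq; push_cast at hbq; linarith
      rw [FF_zero_of _ _ (by omega), this]; ring
    · obtain ⟨b, rfl⟩ : ∃ c, b = c + 1 := ⟨b - 1, by omega⟩
      obtain ⟨a, rfl⟩ : ∃ c, a = c + 1 := ⟨a - 1, by omega⟩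
      have := ih a b (by push_cast at ha; omega) (by push_cast at hb; omega)
      rw [← mul_assoc (2 * (i : ℚ) * _), ← this, Nat.factorial_succ, Nat.factorial_succ]
      push_cast at haq hbq ⊢
      rw [haq, hbq]; ring

lemma prod_aux (k n : ℕ) : ∀ d, d ≤ k → (∏ j ∈ range d, ((j : ℚ) + 1) * (n + d - j)) * n.factorial
    = d.factorial * (n + d).factorial := by
  intro d _
  rw [prod_mul_distrib]
  have h1 : ∏ j ∈ range d, ((j : ℚ) + 1) = d.factorial := by
    rw [← Finset.prod_range_add_one_eq_factorial]; push_cast; rfl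
  have h2 : (∏ j ∈ range d, ((n : ℚ) + d - j)) * n.factorial = (n + d).factorial := by
    rw [← Nat.factorial_mul_descFactorial (show d ≤ n + d by omega), Nat.add_sub_cancel,
      Nat.descFactorial_eq_prod_range]
    push_cast
    rw [mul_comm]
    congr 1
    apply prod_congr rfl
    intro j hj
    rw [mem_range] at hj
    rw [Nat.cast_sub (by omega)]; push_cast; rfl
  rw [h1, mul_assoc, h2]

def VV (k : ℕ) : ℚ := (Matrix.vandermonde (fun i : Fin k => -((k : ℚ) - i) ^ 2)).det

lemma VV_succ (k : ℕ) : VV (k + 1) * (k + 1) = (2 * k + 1).factorial * VV k := by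
  have h : VV (k + 1) = (∏ j ∈ range k, ((j : ℚ) + 1) * ((k + 1 : ℕ) + k - j)) * VV k := by
    rw [VV, VV, Matrix.det_vandermonde, Matrix.det_vandermonde, Fin.prod_univ_succ,
      Fin.prod_Ioi_zero, ← Fin.prod_univ_eq_prod_range (fun j : ℕ => ((j : ℚ) + 1) * ((k + 1 : ℕ) + k - j))]
    congr 1
    · apply prod_congr rfl
      intro j _
      push_cast [Fin.val_succ, Fin.val_zero]; ring
    · apply prod_congr rfl
      intro i _
      rw [Fin.prod_Ioi_succ]
      apply prod_congr rfl
      intro j _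
      push_cast [Fin.val_succ]; ring
  have h2 := prod_aux k (k + 1) k le_rfl
  have h3 : (k.factorial : ℚ) ≠ 0 := by positivity
  rw [Nat.factorial_succ, show k + 1 + k = 2 * k + 1 by ring] at h2
  rw [h]
  apply mul_left_cancel₀ h3
  rw [← mul_assoc (k.factorial : ℚ) ((2 * k + 1).factorial : ℚ), ← h2]
  push_cast; ring

lemma det_poly (k m : ℕ) :
    Matrix.det (Matrix.of fun i j : Fin k =>
      ∏ t ∈ range (k - 1 - j), (((m + j : ℕ) + 2 + t : ℚ) ^ 2 - ((i : ℚ) + 1) ^ 2)) = VV k := by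
  rw [← Matrix.det_submatrix_equiv_self Fin.revPerm, VV,
    Matrix.det_eval_matrixOfPolynomials_eq_det_vandermonde _
      (fun j : Fin k => ∏ t ∈ range (j : ℕ),
        (Polynomial.X + Polynomial.C ((((m + (k - 1 - j) : ℕ) : ℚ) + 2 + t) ^ 2)))]
  · congr 1
    ext i j
    have hi := i.2
    have hj := j.2
    simp only [Matrix.submatrix_apply, Matrix.of_apply, Fin.revPerm_apply, Fin.val_rev,
      Polynomial.eval_prod, Polynomial.eval_add, Polynomial.eval_X, Polynomial.eval_C]
    rw [show k - 1 - (k - ((j : ℕ) + 1)) = j by omega, show k - ((j : ℕ) + 1) = k - 1 - j by omega]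
    apply prod_congr rfl
    intro t _
    rw [Nat.cast_sub (show (i : ℕ) + 1 ≤ k by omega)]
    push_cast
    ring
  · intro j
    rw [Polynomial.natDegree_prod_of_monic _ _ (fun t _ => Polynomial.monic_X_add_C _)]
    simp only [Polynomial.natDegree_X_add_C, sum_const, card_range, smul_eq_mul, mul_one]
  · intro j
    exact Polynomial.monic_prod_of_monic _ _ (fun t _ => Polynomial.monic_X_add_C _)

lemma det_B (k m : ℕ) :
    Matrix.det (Matrix.of fun i j : Fin k => FF (m + j) ((i : ℤ) + 1)) =
      (∏ i ∈ range k, (2 * ((i : ℚ) + 1) / ((m + k + i + 1).factorial * (m + (k - 1 - i)).factorial)))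
      * ((∏ j ∈ range k, ((2 * (m + j) + 1).factorial : ℚ)) * VV k) := by
  rw [← det_poly k m, ← Fin.prod_univ_eq_prod_range (fun i : ℕ =>
      (2 * ((i : ℚ) + 1) / ((m + k + i + 1).factorial * (m + (k - 1 - i)).factorial))) k,
    ← Fin.prod_univ_eq_prod_range (fun j : ℕ => ((2 * (m + j) + 1).factorial : ℚ)) k,
    ← Matrix.det_mul_row, ← Matrix.det_mul_column]
  congr 1
  ext i j
  have hi := i.2
  have hj := j.2
  simp only [Matrix.of_apply]
  have := FF_prod (m + j) (k - 1 - j) (m + k + i + 1) (m + (k - 1 - i)) ((i : ℤ) + 1) (by omega)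
    (by omega) (by omega)
  have h0 : (((m + k + i + 1).factorial : ℚ) * (m + (k - 1 - i)).factorial) ≠ 0 := by positivity
  rw [eq_div_of_mul_eq h0 this]
  push_cast
  ring

lemma det_U (k : ℕ) :
    Matrix.det (Matrix.of fun i j : Fin k => FF j ((i : ℤ) + 1)) = 1 := by
  rw [Matrix.det_of_isUpperTriangular]
  · apply prod_eq_one
    intro i _
    rw [Matrix.of_apply, FF, add_sub_cancel_right, GG_self, GG_zero_of _ _ (by omega)]; simp
  · intro i j hij
    have : (j : ℕ) < i := hij
    rw [Matrix.of_apply, FF_zero_of _ _ (by omega)]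

lemma det_A (k m : ℕ) :
    Matrix.det (Matrix.of fun i j : Fin k =>
        binQ (2 * m) ((m : ℤ) - (i : ℤ) + (j : ℤ)) -
          binQ (2 * m) ((m : ℤ) - (i : ℤ) - (j : ℤ) - 2)) =
    Matrix.det (Matrix.of fun i j : Fin k => FF (m + j) ((i : ℤ) + 1)) := by
  rw [← mul_one (Matrix.det _), ← det_U k, ← Matrix.det_mul]
  congr 1
  ext i j
  rw [Matrix.mul_apply, Matrix.of_apply, ← conv k m j j.2]
  rw [← Fin.sum_univ_eq_sum_range (fun l : ℕ => (GG m ((l + 1 : ℤ) - ((i : ℤ) + 1))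
    - GG m (-((i : ℤ) + 1) - (l + 1 : ℤ))) * FF j (l + 1))]
  apply sum_congr rfl
  intro l _
  rw [Matrix.of_apply, Matrix.of_apply, ← GG_eq, ← GG_eq]
  ring_nf

lemma R_aux (m k : ℕ) :
    (∏ i ∈ Icc 1 m, ((2 * i + (2 * k + 1) : ℕ) : ℚ) / ((i + (2 * k + 1) : ℕ) : ℚ)) *
    (∏ i ∈ Icc 1 m, ((2 * i + (2 * k + 2) : ℕ) : ℚ) / ((i + (2 * k + 2) : ℕ) : ℚ)) =
    (2 * k + 2 * m + 2).factorial * (2 * k + 1).factorial /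
      ((m + 2 * k + 1).factorial * (m + 2 * k + 2).factorial) := by
  induction m with
  | zero =>
    simp
    field_simp
  | succ m ih =>
    rw [prod_Icc_succ_top (by omega), prod_Icc_succ_top (by omega), mul_mul_mul_comm, ih,
      show 2 * k + 2 * (m + 1) + 2 = 2 * k + 2 * m + 2 + 1 + 1 by ring,
      show m + 1 + 2 * k + 1 = m + 2 * k + 1 + 1 by ring,
      show m + 1 + 2 * k + 2 = m + 2 * k + 1 + 1 + 1 by ring,
      show m + 2 * k + 2 = m + 2 * k + 1 + 1 by ring,
      Nat.factorial_succ (2 * k + 2 * m + 2 + 1), Nat.factorial_succ (2 * k + 2 * m + 2),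
      Nat.factorial_succ (m + 2 * k + 1 + 1), Nat.factorial_succ (m + 2 * k + 1)]
    push_cast
    field_simp
    ring

lemma E_succ (m k : ℕ) : (∏ i ∈ range (k + 1), ((m + (k + 1) + i + 1).factorial : ℚ)) *
    (m + k + 1).factorial = (∏ i ∈ range k, ((m + k + i + 1).factorial : ℚ)) *
      (m + 2 * k + 1).factorial * (m + 2 * k + 2).factorial := by
  have h := prod_range_succ' (fun i => ((m + k + i + 1).factorial : ℚ)) (k + 1)
  rw [prod_range_succ, prod_range_succ] at h
  rw [show m + 2 * k + 1 = m + k + k + 1 by ring, show m + 2 * k + 2 = m + k + (k + 1) + 1 by ring, h]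
  simp only [add_zero]
  congr 1
  apply prod_congr rfl
  intro i _
  congr 2; ring

lemma final (m k : ℕ) : (2 : ℚ) ^ m *
      ((∏ i ∈ range k, (2 * ((i : ℚ) + 1) / ((m + k + i + 1).factorial * (m + (k - 1 - i)).factorial)))
      * ((∏ j ∈ range k, ((2 * (m + j) + 1).factorial : ℚ)) * VV k))
    = ∏ j ∈ range (2 * k + 1), ∏ i ∈ Icc 1 m, ((2 * i + j : ℕ) : ℚ) / ((i + j : ℕ) : ℚ) := by
  simp only [prod_div_distrib, prod_mul_distrib (s := range _)]
  simp only [prod_range_reflect (fun i => ((m + i).factorial : ℚ))]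
  simp only [← prod_div_distrib]
  induction k with
  | zero =>
    simp [VV]
    rw [← prod_div_distrib]
    symm
    rw [prod_congr rfl (g := fun _ => (2 : ℚ))]
    · simp
    · intro i hi
      rw [mem_Icc] at hi
      have : (i : ℚ) ≠ 0 := by
        have : i ≠ 0 := by omega
        exact_mod_cast this
      field_simp
  | succ k ih =>
    rw [show 2 * (k + 1) + 1 = 2 * k + 1 + 1 + 1 by ring, prod_range_succ _ (2 * k + 1 + 1),
      prod_range_succ _ (2 * k + 1), ← ih, mul_assoc _ (∏ i ∈ Icc 1 m, _) (∏ i ∈ Icc 1 m, _), R_aux]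
    have hE := E_succ m k
    have hV := VV_succ k
    have hE0 : (∏ i ∈ range k, ((m + k + i + 1).factorial : ℚ)) ≠ 0 :=
      prod_ne_zero_iff.2 fun i _ => by positivity
    have hF0 : (∏ i ∈ range k, ((m + i).factorial : ℚ)) ≠ 0 :=
      prod_ne_zero_iff.2 fun i _ => by positivity
    have hk0 : (k : ℚ) + 1 ≠ 0 := by positivity
    rw [eq_div_of_mul_eq hk0 hV, eq_div_of_mul_eq (by positivity) hE]
    simp only [prod_range_succ _ k]
    rw [show 2 * k + 2 * m + 2 = 2 * (m + k) + 1 + 1 by ring,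
      Nat.factorial_succ (2 * (m + k) + 1), Nat.factorial_succ (m + k)]
    push_cast
    field_simp
    ring

/-- The determinant evaluation for Identity 2 in the odd case `n = 2k+1`:
`2^m · det( C(2m, m-i+j) - C(2m, m-i-j) )_{1≤i,j≤k}
  = ∏_{j=0}^{2k} ∏_{i=1}^{m} (2i+j)/(i+j)`
(with `0`-based `i, j` the entries read `C(2m, m-i+j) - C(2m, m-i-j-2)`). -/
theorem stmt_17 (k m : ℕ) (hk : 1 ≤ k) :
    (2 : ℚ) ^ m *
      Matrix.det (Matrix.of fun i j : Fin k =>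
        binQ (2 * m) ((m : ℤ) - (i : ℤ) + (j : ℤ)) -
          binQ (2 * m) ((m : ℤ) - (i : ℤ) - (j : ℤ) - 2))
    = ∏ j ∈ range (2 * k + 1), ∏ i ∈ Icc 1 m, ((2 * i + j : ℕ) : ℚ) / ((i + j : ℕ) : ℚ) := by
  rw [det_A, det_B, final]
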